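/- arXiv:2602.23450 — 3 statements merged into one kernel-verified Lean document; each statement's English description precedes it below -/
import Mathlib

section
/- Let K_1, K_2, K_3 be invertible 3×3 complex matrices, R_1, R_2, R_3 complex rotations, c_1, c_2, c_3 ∈ ℂ³, with fundamental matrices F_ij = (K_i)⁻ᵀ * R_i * [c_j − c_i]_× * (R_j)ᵀ * (K_j)⁻¹ for i ≠ j (so F_ji = (F_ij)ᵀ). Then the three quintic matrix constraints hold: adj(F_13) * F_12 * adj(F_32) = 0, adj(F_12) * F_13 * adj(F_23) = 0, and adj(F_21) * F_23 * adj(F_13) = 0. -/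
open Matrix

/-- The skew-symmetric "hat" matrix `[c]ₓ` of `c ∈ ℂ³`, so that `[c]ₓ v = c × v`. -/
def crossMat (c : Fin 3 → ℂ) : Matrix (Fin 3) (Fin 3) ℂ :=
  !![0, -c 2, c 1; c 2, 0, -c 0; -c 1, c 0, 0]

/-!
All constraints have the shape `adj(F_ik) * F_ij * adj(F_kj) = 0`, where
`F_ij = A_i [c_j - c_i]ₓ A_jᵀ` with `A_i = K_i⁻ᵀ R_i`. Since `adj` reverses products and
`adj(A) * A` is scalar, the factors `A_i` can be pulled out, which reduces the claim to the
matrices `[c_j - c_i]ₓ`. There `adj([u]ₓ) = u uᵀ`, so the product is a multiple of the triple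
product `(c_k - c_i) ⬝ ((c_j - c_i) × (c_j - c_k))`, which vanishes because the sides of a
triangle are linearly dependent.
-/

theorem dotProduct_add_cross_self {α : Type*} [CommRing α] (v w : Fin 3 → α) :
    v ⬝ᵥ ((v + w) ⨯₃ w) = 0 := by
  rw [map_add, LinearMap.add_apply, cross_self, add_zero, dot_self_cross]

theorem vecMulVec_mul_mul_vecMulVec {α l m n o : Type*} [CommSemiring α] [Fintype m] [Fintype n]
    (u : l → α) (v : m → α) (M : Matrix m n α) (w : n → α) (x : o → α) :
    vecMulVec u v * M * vecMulVec w x = (v ⬝ᵥ M *ᵥ w) • vecMulVec u x := by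
  rw [vecMulVec_mul, vecMulVec_mul_vecMulVec, ← dotProduct_mulVec, vecMulVec_smul]

theorem adjugate_mul_mul_adjugate_of_mul_mul {α n : Type*} [CommRing α] [Fintype n]
    [DecidableEq n] (A B D E X Y Z : Matrix n n α) :
    (A * X * D).adjugate * (A * Y * B) * (E * Z * B).adjugate =
      (A.det * B.det) • (D.adjugate * (X.adjugate * Y * Z.adjugate) * E.adjugate) := by
  calc
    _ = D.adjugate * (X.adjugate * ((A.adjugate * A) * Y * (B * B.adjugate)) * Z.adjugate) *
          E.adjugate := by
      simp only [adjugate_mul_distrib, Matrix.mul_assoc]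
    _ = _ := by
      simp only [adjugate_mul, mul_adjugate, Matrix.smul_mul, Matrix.mul_smul, Matrix.one_mul,
        Matrix.mul_one, smul_smul, mul_comm]

theorem crossMat_mulVec (u v : Fin 3 → ℂ) : crossMat u *ᵥ v = u ⨯₃ v := by
  ext i
  fin_cases i <;> simp [crossMat, cross_apply, mulVec, dotProduct, Fin.sum_univ_three] <;> ring

theorem adjugate_crossMat (u : Fin 3 → ℂ) : (crossMat u).adjugate = vecMulVec u u := by
  rw [crossMat, adjugate_fin_three_of]
  ext i j
  fin_cases i <;> fin_cases j <;> simp [vecMulVec_apply] <;> ring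

theorem adjugate_crossMat_mul_crossMat_add_mul_adjugate_crossMat (v w : Fin 3 → ℂ) :
    (crossMat v).adjugate * crossMat (v + w) * (crossMat w).adjugate = 0 := by
  rw [adjugate_crossMat, adjugate_crossMat, vecMulVec_mul_mul_vecMulVec, crossMat_mulVec,
    dotProduct_add_cross_self, zero_smul]

theorem stmt4_general {ι : Type*} (A : ι → Matrix (Fin 3) (Fin 3) ℂ) (c : ι → Fin 3 → ℂ)
    (F : ι → ι → Matrix (Fin 3) (Fin 3) ℂ)
    (hF : ∀ i j, F i j = A i * crossMat (c j - c i) * (A j)ᵀ) (i j k : ι) :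
    (F i k).adjugate * F i j * (F k j).adjugate = 0 := by
  have side_add : c j - c i = (c k - c i) + (c j - c k) := by abel
  rw [hF, hF, hF, adjugate_mul_mul_adjugate_of_mul_mul, side_add,
    adjugate_crossMat_mul_crossMat_add_mul_adjugate_crossMat, Matrix.mul_zero, Matrix.zero_mul,
    smul_zero]

/-- The quintic constraints of equation (2.11) hold on compatible fundamental matrix
triples. Indices are 0-based: camera `i+1` of the paper is camera `i` here. -/
theorem stmt4 (K R : Fin 3 → Matrix (Fin 3) (Fin 3) ℂ) (c : Fin 3 → Fin 3 → ℂ)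
    (hK : ∀ i, IsUnit (K i).det)
    (hR : ∀ i, R i * (R i)ᵀ = 1) (hdR : ∀ i, (R i).det = 1)
    (F : Fin 3 → Fin 3 → Matrix (Fin 3) (Fin 3) ℂ)
    (hF : ∀ i j, F i j = ((K i)⁻¹)ᵀ * R i * crossMat (c j - c i) * (R j)ᵀ * (K j)⁻¹) :
    (F 0 2).adjugate * F 0 1 * (F 2 1).adjugate = 0 ∧
    (F 0 1).adjugate * F 0 2 * (F 1 2).adjugate = 0 ∧
    (F 1 0).adjugate * F 1 2 * (F 0 2).adjugate = 0 := by
  have quintic := stmt4_general (fun i ↦ ((K i)⁻¹)ᵀ * R i) c F fun i j ↦ by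
    rw [hF, transpose_mul, transpose_transpose, ← Matrix.mul_assoc]
  exact ⟨quintic 0 1 2, quintic 0 2 1, quintic 1 2 0⟩
end

section
/- Let K_1, K_2, K_3 be invertible 3×3 complex matrices, R_1, R_2, R_3 complex rotations, c_1, c_2, c_3 ∈ ℂ³, with fundamental matrices F_ij = (K_i)⁻ᵀ * R_i * [c_j − c_i]_× * (R_j)ᵀ * (K_j)⁻¹ and epipole e_23 := K_2 * R_2 *ᵥ (c_3 − c_2). Then the epipolar line F_12.mulVec e_23 lies in the column space of F_13; that is, there exists v ∈ ℂ³ with F_13.mulVec v = F_12.mulVec e_23. -/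
open Matrix

/-!
In world coordinates the epipole `e_jk` is the baseline `c_k - c_j`, which `F_ij` maps to
`(c_j - c_i) × (c_k - c_j)`, up to the factor `K_i⁻ᵀ R_i` that `F_ij` and `F_ik` share. Replacing
`c_j - c_i` by `c_k - c_i` does not change this cross product, because the two differ by the
baseline itself. So `F_ik` attains the same value at the image of the baseline in camera `k`.
-/

section Cameras

variable {ι S : Type*} [CommRing S]

/-- The fundamental matrix `F_ij` of a family of cameras with calibrations `K`, orientations `R` and
centers `c`, over any commutative ring. The matrix `[c_j - c_i]ₓ` is encoded as the matrix of the
linear map `v ↦ (c_j - c_i) × v`. -/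
noncomputable def fundamentalMatrix (K R : ι → Matrix (Fin 3) (Fin 3) S) (c : ι → Fin 3 → S)
    (i j : ι) : Matrix (Fin 3) (Fin 3) S :=
  ((K i)⁻¹)ᵀ * R i * LinearMap.toMatrix' (crossProduct (c j - c i)) * (R j)ᵀ * (K j)⁻¹

/-- The epipole `e_ij`: the image in camera `i` of the center of camera `j`, as a vector of
homogeneous coordinates. -/
def epipole (K R : ι → Matrix (Fin 3) (Fin 3) S) (c : ι → Fin 3 → S) (i j : ι) : Fin 3 → S :=
  (K i * R i) *ᵥ (c j - c i)

theorem sub_crossProduct_sub (a b d : Fin 3 → S) :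
    (d - a) ⨯₃ (d - b) = (b - a) ⨯₃ (d - b) := by
  rw [← sub_add_sub_cancel d b a, map_add, LinearMap.add_apply, cross_self, zero_add]

theorem transpose_mul_inv_mulVec_mul_mulVec {n : Type*} [Fintype n] [DecidableEq n]
    {K R : Matrix n n S} (hK : IsUnit K.det) (hR : R * Rᵀ = 1) (w : n → S) :
    (Rᵀ * K⁻¹) *ᵥ ((K * R) *ᵥ w) = w := by
  rw [mulVec_mulVec, Matrix.mul_assoc, nonsing_inv_mul_cancel_left K R hK,
    mul_eq_one_comm.mp hR, one_mulVec]

theorem fundamentalMatrix_mulVec_mul_mulVec (K R : ι → Matrix (Fin 3) (Fin 3) S)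
    (c : ι → Fin 3 → S) (i : ι) {j : ι} (hK : IsUnit (K j).det) (hR : R j * (R j)ᵀ = 1)
    (w : Fin 3 → S) :
    fundamentalMatrix K R c i j *ᵥ ((K j * R j) *ᵥ w) =
      (((K i)⁻¹)ᵀ * R i) *ᵥ ((c j - c i) ⨯₃ w) := by
  rw [fundamentalMatrix, Matrix.mul_assoc _ (R j)ᵀ, ← mulVec_mulVec,
    transpose_mul_inv_mulVec_mul_mulVec hK hR, ← mulVec_mulVec, LinearMap.toMatrix'_mulVec]

theorem stmt10_general (K R : ι → Matrix (Fin 3) (Fin 3) S) (c : ι → Fin 3 → S)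
    (hK : ∀ i, IsUnit (K i).det) (hR : ∀ i, R i * (R i)ᵀ = 1) (i j k : ι) :
    ∃ v, fundamentalMatrix K R c i k *ᵥ v = fundamentalMatrix K R c i j *ᵥ epipole K R c j k := by
  refine ⟨(K k * R k) *ᵥ (c k - c j), ?_⟩
  rw [epipole, fundamentalMatrix_mulVec_mul_mulVec K R c i (hK k) (hR k),
    fundamentalMatrix_mulVec_mul_mulVec K R c i (hK j) (hR j), sub_crossProduct_sub]

end Cameras

theorem crossMat_eq_toMatrix'_crossProduct (w : Fin 3 → ℂ) :
    crossMat w = LinearMap.toMatrix' (crossProduct w) := by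
  ext i j
  fin_cases i <;> fin_cases j <;> simp [crossMat, cross_apply, LinearMap.toMatrix'_apply]

/-- Geometric interpretation of the quartics: the epipolar line `F_12 e_23` lies in
the column space of `F_13`. Indices are 0-based: camera `i+1` of the paper is
camera `i` here. -/
theorem stmt10 (K R : Fin 3 → Matrix (Fin 3) (Fin 3) ℂ) (c : Fin 3 → Fin 3 → ℂ)
    (hK : ∀ i, IsUnit (K i).det)
    (hR : ∀ i, R i * (R i)ᵀ = 1) (hdR : ∀ i, (R i).det = 1)
    (F : Fin 3 → Fin 3 → Matrix (Fin 3) (Fin 3) ℂ)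
    (hF : ∀ i j, F i j = ((K i)⁻¹)ᵀ * R i * crossMat (c j - c i) * (R j)ᵀ * (K j)⁻¹)
    (e23 : Fin 3 → ℂ) (he23 : e23 = (K 1 * R 1) *ᵥ (c 2 - c 1)) :
    ∃ v : Fin 3 → ℂ, F 0 2 *ᵥ v = F 0 1 *ᵥ e23 := by
  obtain rfl : F = fundamentalMatrix K R c := by
    funext i j
    rw [hF, crossMat_eq_toMatrix'_crossProduct, fundamentalMatrix]
  exact he23 ▸ stmt10_general K R c hK hR 0 1 2
end

section
/- Let R_1, R_2, R_3 be complex rotations and c_1, c_2, c_3 ∈ ℂ³, with essential matrices E_ij = R_i * [c_j − c_i]_× * (R_j)ᵀ for all i ≠ j (so E_ji = (E_ij)ᵀ). Then for all pairwise distinct i, j, k ∈ {1,2,3}: (E_ij)ᵀ * E_ij * E_jk − (1/2 : ℂ) * trace((E_ij)ᵀ * E_ij) • E_jk + adj(E_ij) * (E_ki)ᵀ = 0. -/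
open Matrix

/-!
By orthogonality the rotations cancel inside all products and traces, and the adjugate of
`R A Sᵀ` is `S (adj A) Rᵀ`, so the identity reduces to one about the hat matrices of the sides
`a`, `b`, `d` of the triangle of centers. There `[a]ᵀ[a] = (a ⬝ a) I - a aᵀ` has trace
`2 (a ⬝ a)` and `[a]` has adjugate `a aᵀ`, so that what remains is `- a aᵀ[b] - a aᵀ[d]`. This
vanishes because `b + d = -a` and `aᵀ[a] = 0`.
-/

section Orthogonal

variable {n K : Type*} [Fintype n] [DecidableEq n] [CommRing K] {R S : Matrix n n K}

lemma adjugate_eq_det_smul_transpose (hR : R * Rᵀ = 1) : R.adjugate = R.det • Rᵀ :=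
  calc R.adjugate = R.adjugate * (R * Rᵀ) := by rw [hR, mul_one]
    _ = R.det • Rᵀ := by rw [← mul_assoc, adjugate_mul, smul_mul_assoc, one_mul]

lemma adjugate_mul_mul_transpose (hR : R * Rᵀ = 1) (hS : S * Sᵀ = 1) (hdet : R.det = S.det)
    (A : Matrix n n K) : (R * A * Sᵀ).adjugate = S * A.adjugate * Rᵀ := by
  have det_mul_det : S.det * R.det = 1 := by
    simpa only [det_mul, det_transpose, det_one, hdet] using congrArg det hS
  rw [adjugate_mul_distrib, adjugate_mul_distrib, ← adjugate_transpose,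
    adjugate_eq_det_smul_transpose hR, adjugate_eq_det_smul_transpose hS, transpose_smul,
    transpose_transpose, smul_mul_assoc, mul_smul_comm, mul_smul_comm, smul_smul, det_mul_det,
    one_smul, mul_assoc]

lemma mul_transpose_mul_mul_cancel (hR : R * Rᵀ = 1) (A B : Matrix n n K) :
    A * Rᵀ * (R * B) = A * B := by
  rw [mul_assoc, ← mul_assoc Rᵀ, mul_eq_one_comm.mp hR, one_mul]

lemma transpose_mul_self_mul_mul_transpose (hR : R * Rᵀ = 1) (A : Matrix n n K) :
    (R * A * Sᵀ)ᵀ * (R * A * Sᵀ) = S * (Aᵀ * A) * Sᵀ := by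
  rw [transpose_mul, transpose_mul, transpose_transpose, ← mul_assoc S, mul_assoc R,
    mul_transpose_mul_mul_cancel hR]
  simp only [mul_assoc]

lemma trace_mul_mul_transpose (hS : S * Sᵀ = 1) (A : Matrix n n K) :
    (S * A * Sᵀ).trace = A.trace := by
  rw [trace_mul_comm, ← mul_assoc, mul_eq_one_comm.mp hS, one_mul]

end Orthogonal

section CrossMatrix

variable {K : Type*} [CommRing K]

/-- The hat map `a ↦ [a]ₓ` over any commutative ring, as the linear map sending `a` to the matrix
of `v ↦ a ⨯₃ v`. Over `ℂ` it is `crossMat`. -/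
def crossMatrix : (Fin 3 → K) →ₗ[K] Matrix (Fin 3) (Fin 3) K :=
  LinearMap.toMatrix'.toLinearMap ∘ₗ crossProduct

lemma crossMatrix_mulVec (a v : Fin 3 → K) : crossMatrix a *ᵥ v = crossProduct a v :=
  LinearMap.toMatrix'_mulVec _ v

lemma crossMatrix_eq (a : Fin 3 → K) :
    crossMatrix a = !![0, -a 2, a 1; a 2, 0, -a 0; -a 1, a 0, 0] := by
  ext i j
  fin_cases i <;> fin_cases j <;> simp [crossMatrix, LinearMap.toMatrix'_apply, cross_apply]

lemma crossMatrix_transpose (a : Fin 3 → K) : (crossMatrix a)ᵀ = -crossMatrix a := by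
  ext i j
  fin_cases i <;> fin_cases j <;> simp [crossMatrix_eq]

lemma vecMul_crossMatrix_self (a : Fin 3 → K) : a ᵥ* crossMatrix a = 0 := by
  rw [← mulVec_transpose, crossMatrix_transpose, neg_mulVec, crossMatrix_mulVec, cross_self,
    neg_zero]

lemma crossMatrix_transpose_mul_self (a : Fin 3 → K) :
    (crossMatrix a)ᵀ * crossMatrix a = (a ⬝ᵥ a) • 1 - vecMulVec a a := by
  ext i j
  fin_cases i <;> fin_cases j <;>
    simp [crossMatrix_eq, mul_apply, Fin.sum_univ_three, vecMulVec_apply, dotProduct] <;> ring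

lemma trace_crossMatrix_transpose_mul_self (a : Fin 3 → K) :
    ((crossMatrix a)ᵀ * crossMatrix a).trace = 2 * (a ⬝ᵥ a) := by
  rw [crossMatrix_transpose_mul_self, trace_sub, trace_smul, trace_one, trace_vecMulVec,
    Fintype.card_fin, smul_eq_mul]
  push_cast
  ring

lemma adjugate_crossMatrix (a : Fin 3 → K) : (crossMatrix a).adjugate = vecMulVec a a := by
  ext i j
  fin_cases i <;> fin_cases j <;>
    simp [crossMatrix_eq, adjugate_fin_three, vecMulVec_apply] <;> ring

lemma crossMatrix_triangle_identity [Invertible (2 : K)] {a b d : Fin 3 → K}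
    (habd : a + b + d = 0) :
    (crossMatrix a)ᵀ * crossMatrix a * crossMatrix b
      - (⅟2 * ((crossMatrix a)ᵀ * crossMatrix a).trace) • crossMatrix b
      + (crossMatrix a).adjugate * (crossMatrix d)ᵀ = 0 := by
  have transpose_side : (crossMatrix d)ᵀ = crossMatrix a + crossMatrix b := by
    rw [crossMatrix_transpose, ← map_neg, ← eq_neg_of_add_eq_zero_left habd, map_add]
  rw [trace_crossMatrix_transpose_mul_self, invOf_mul_cancel_left', crossMatrix_transpose_mul_self,
    adjugate_crossMatrix, transpose_side, sub_mul, smul_mul_assoc, one_mul, mul_add,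
    vecMulVec_mul a a (crossMatrix a), vecMul_crossMatrix_self, vecMulVec_zero]
  abel

end CrossMatrix

section EssentialMatrix

variable {K : Type*} [CommRing K]

/-- The essential matrix of the ordered pair of cameras with centers `x`, `y` and orientations given
by matrices `R`, `S`, which may be arbitrary. -/
def essentialMatrix (R S : Matrix (Fin 3) (Fin 3) K) (x y : Fin 3 → K) :
    Matrix (Fin 3) (Fin 3) K :=
  R * crossMatrix (y - x) * Sᵀ

theorem stmt13_general [Invertible (2 : K)] {R S : Matrix (Fin 3) (Fin 3) K}
    (hR : R * Rᵀ = 1) (hS : S * Sᵀ = 1) (hdet : R.det = S.det)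
    (T : Matrix (Fin 3) (Fin 3) K) (x y z : Fin 3 → K) :
    (essentialMatrix R S x y)ᵀ * essentialMatrix R S x y * essentialMatrix S T y z
      - (⅟2 * ((essentialMatrix R S x y)ᵀ * essentialMatrix R S x y).trace) •
        essentialMatrix S T y z
      + (essentialMatrix R S x y).adjugate * (essentialMatrix T R z x)ᵀ = 0 := by
  have triangle := crossMatrix_triangle_identity (show (y - x) + (z - y) + (x - z) = 0 by abel)
  unfold essentialMatrix
  generalize crossMatrix (y - x) = A, crossMatrix (z - y) = B, crossMatrix (x - z) = D at triangle ⊢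
  calc _ = S * (Aᵀ * A * B) * Tᵀ - (⅟2 * (Aᵀ * A).trace) • (S * B * Tᵀ)
        + S * (A.adjugate * Dᵀ) * Tᵀ := by
        rw [transpose_mul_self_mul_mul_transpose hR, trace_mul_mul_transpose hS, mul_assoc S B,
          mul_transpose_mul_mul_cancel hS, adjugate_mul_mul_transpose hR hS hdet, transpose_mul,
          transpose_mul, transpose_transpose, mul_transpose_mul_mul_cancel hR]
        simp only [mul_assoc]
    _ = S * (Aᵀ * A * B - (⅟2 * (Aᵀ * A).trace) • B + A.adjugate * Dᵀ) * Tᵀ := by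
        simp only [mul_add, mul_sub, add_mul, sub_mul, mul_smul_comm, smul_mul_assoc]
    _ = 0 := by rw [triangle, mul_zero, zero_mul]

end EssentialMatrix

lemma crossMat_eq_crossMatrix (c : Fin 3 → ℂ) : crossMat c = crossMatrix c :=
  (crossMatrix_eq c).symm

/-- Martyushev's necessary condition (2.17) for compatible essential matrix triples.
Indices are 0-based: camera `i+1` of the paper is camera `i` here. -/
theorem stmt13 (R : Fin 3 → Matrix (Fin 3) (Fin 3) ℂ) (c : Fin 3 → Fin 3 → ℂ)
    (hR : ∀ i, R i * (R i)ᵀ = 1) (hdR : ∀ i, (R i).det = 1)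
    (E : Fin 3 → Fin 3 → Matrix (Fin 3) (Fin 3) ℂ)
    (hE : ∀ i j, E i j = R i * crossMat (c j - c i) * (R j)ᵀ) :
    ∀ i j k : Fin 3, i ≠ j → j ≠ k → i ≠ k →
      (E i j)ᵀ * E i j * E j k
        - ((1 / 2 : ℂ) * ((E i j)ᵀ * E i j).trace) • E j k
        + (E i j).adjugate * (E k i)ᵀ = 0 := by
  intro i j k _ _ _
  have := invertibleOfNonzero (two_ne_zero (α := ℂ))
  simpa only [essentialMatrix, ← crossMat_eq_crossMatrix, ← hE, invOf_eq_inv, ← one_div] using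
    stmt13_general (hR i) (hR j) ((hdR i).trans (hdR j).symm) (R k) (c i) (c j) (c k)
end
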